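/- arXiv:1606.03562 — 4 statements merged into one kernel-verified Lean document; each statement's English description precedes it below -/
import Mathlib

section
/- For any justification logic JL among J and its extensions by the axioms jT, jD, j4, jB, j5, and any constant specification CS for JL, a JL-formula F is provable in the Hilbert system JL_CS if and only if F is JL_CS-valid, i.e., true in every M-model of JL_CS. -/
namespace JLTab

/-- Justification terms: variables, constants, application, sum,
verifier `!`, negative verifier `?`, weak negative verifier `?̄`. -/
inductive Term : Type
  | var : ℕ → Term
  | const : ℕ → Term
  | app : Term → Term → Term
  | sum : Term → Term → Term
  | bang : Term → Term
  | quest : Term → Term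
  | qbar : Term → Term
  deriving DecidableEq

/-- JL-formulas: `A ::= p | ⊥ | ¬A | A → A | t:A`. -/
inductive Fml : Type
  | prop : ℕ → Fml
  | bot : Fml
  | neg : Fml → Fml
  | imp : Fml → Fml → Fml
  | box : Term → Fml → Fml
  deriving DecidableEq

/-- A justification logic JL is J extended by any combination of jT, jD, j4, jB, j5. -/
structure Logic where
  hasT : Bool
  hasD : Bool
  has4 : Bool
  hasB : Bool
  has5 : Bool

/-- The basic justification logic J. -/
def Logic.J : Logic := ⟨false, false, false, false, false⟩

/-- The logic of proofs LP = JT4. -/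
def Logic.LP : Logic := ⟨true, false, true, false, false⟩

/-- The logic JT45. -/
def Logic.JT45 : Logic := ⟨true, false, true, false, true⟩

/-- Propositional evaluation of a formula, treating propositional variables and
formulas `t:A` as atoms. -/
def evalProp (v : Fml → Bool) : Fml → Bool
  | .prop n => v (.prop n)
  | .bot => false
  | .neg A => !(evalProp v A)
  | .imp A B => !(evalProp v A) || evalProp v B
  | .box t A => v (.box t A)

/-- A propositional tautology. -/
def IsTaut (A : Fml) : Prop := ∀ v : Fml → Bool, evalProp v A = true

/-- Axiom instances of the justification logic `L`. -/
inductive Axm (L : Logic) : Fml → Prop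
  | taut {A} : IsTaut A → Axm L A
  | sumL {s t A} : Axm L (.imp (.box s A) (.box (.sum s t) A))
  | sumR {s t A} : Axm L (.imp (.box s A) (.box (.sum t s) A))
  | jK {s t A B} :
      Axm L (.imp (.box s (.imp A B)) (.imp (.box t A) (.box (.app s t) B)))
  | jT {t A} : L.hasT = true → Axm L (.imp (.box t A) A)
  | jD {t} : L.hasD = true → Axm L (.imp (.box t .bot) .bot)
  | j4 {t A} : L.has4 = true → Axm L (.imp (.box t A) (.box (.bang t) (.box t A)))
  | jB {t A} : L.hasB = true →
      Axm L (.imp (.neg A) (.box (.qbar t) (.neg (.box t A))))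
  | j5 {t A} : L.has5 = true →
      Axm L (.imp (.neg (.box t A)) (.box (.quest t) (.neg (.box t A))))

/-- Formulas of the form `c_{i_n} : ⋯ : c_{i_1} : A` (n ≥ 1) with `A` an axiom
instance of `L`; exactly the formulas produced by Iterated Axiom Necessitation. -/
inductive IsIAN (L : Logic) : Fml → Prop
  | base {c A} : Axm L A → IsIAN L (.box (.const c) A)
  | step {c F} : IsIAN L F → IsIAN L (.box (.const c) F)

/-- A constant specification for `L`: a downward closed set of formulas of the
form `c_{i_n} : ⋯ : c_{i_1} : A` with `A` an axiom instance of `L`. -/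
structure ConstSpec (L : Logic) where
  set : Set Fml
  mem_ian : ∀ F ∈ set, IsIAN L F
  downward : ∀ c F, Fml.box (Term.const c) F ∈ set → IsIAN L F → F ∈ set

/-- The Hilbert system JL_CS: axioms of `L`, Modus Ponens, and Iterated Axiom
Necessitation restricted to the constant specification `cs`. -/
inductive Deriv (L : Logic) (cs : ConstSpec L) : Fml → Prop
  | axm {A} : Axm L A → Deriv L cs A
  | mp {A B} : Deriv L cs (.imp A B) → Deriv L cs A → Deriv L cs B
  | ian {F} : F ∈ cs.set → Deriv L cs F

/-- An M-model (Mkrtychev model): an admissible evidence function together with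
a valuation of propositional variables. -/
structure MModel where
  ev : Term → Set Fml
  val : ℕ → Prop

/-- Truth in an M-model; `t:A` is true iff `A ∈ E(t)`. -/
def MModel.sat (M : MModel) : Fml → Prop
  | .prop n => M.val n
  | .bot => False
  | .neg A => ¬ M.sat A
  | .imp A B => M.sat A → M.sat B
  | .box t A => A ∈ M.ev t

/-- `M` is an M-model for JL_CS: conditions E1–E3 always, and E4–E8 according to
the extra axioms of the logic `L`. -/
structure IsModel (L : Logic) (cs : ConstSpec L) (M : MModel) : Prop where
  e1 : ∀ s t A B, Fml.imp A B ∈ M.ev s → A ∈ M.ev t → B ∈ M.ev (.app s t)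
  e2l : ∀ s t, M.ev s ⊆ M.ev (.sum s t)
  e2r : ∀ s t, M.ev t ⊆ M.ev (.sum s t)
  e3 : ∀ c F, Fml.box (.const c) F ∈ cs.set → F ∈ M.ev (.const c)
  e4 : L.hasT = true → ∀ t A, A ∈ M.ev t → M.sat A
  e5 : L.hasD = true → ∀ t, Fml.bot ∉ M.ev t
  e6 : L.has4 = true → ∀ t A, A ∈ M.ev t → Fml.box t A ∈ M.ev (.bang t)
  e7 : L.hasB = true → ∀ t A, ¬ M.sat A → Fml.neg (.box t A) ∈ M.ev (.qbar t)
  e8 : L.has5 = true → ∀ t A, A ∉ M.ev t → Fml.neg (.box t A) ∈ M.ev (.quest t)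

/-- `A` is JL_CS-valid: true in every M-model of JL_CS. -/
def Valid (L : Logic) (cs : ConstSpec L) (A : Fml) : Prop :=
  ∀ M : MModel, IsModel L cs M → M.sat A

/-- `Subf A B`: `A` is a subformula of `B`. -/
inductive Subf : Fml → Fml → Prop
  | refl (A) : Subf A A
  | neg {A B} : Subf A B → Subf A (.neg B)
  | impL {A B C} : Subf A B → Subf A (.imp B C)
  | impR {A C B} : Subf A C → Subf A (.imp B C)
  | box {A B t} : Subf A B → Subf A (.box t B)

/-- `A` is a CS-subformula of the root set `R`: a subformula of a formula in
`R ∪ CS`. -/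
def CSSub {L : Logic} (cs : ConstSpec L) (R : Set Fml) (A : Fml) : Prop :=
  (∃ B ∈ R, Subf A B) ∨ (∃ F ∈ cs.set, Subf A F)

/-- `A` is a weak CS-subformula of the root set `R`: a subformula, or the
negation of a subformula, of a formula in `R ∪ CS`. -/
def WeakCSSub {L : Logic} (cs : ConstSpec L) (R : Set Fml) (A : Fml) : Prop :=
  CSSub cs R A ∨ ∃ C, A = Fml.neg C ∧ CSSub cs R C

/-- `SubTm u t`: `u` is a subterm of `t`. -/
inductive SubTm : Term → Term → Prop
  | refl (t) : SubTm t t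
  | appL {u s t} : SubTm u s → SubTm u (.app s t)
  | appR {u s t} : SubTm u t → SubTm u (.app s t)
  | sumL {u s t} : SubTm u s → SubTm u (.sum s t)
  | sumR {u s t} : SubTm u t → SubTm u (.sum s t)
  | bang {u t} : SubTm u t → SubTm u (.bang t)
  | quest {u t} : SubTm u t → SubTm u (.quest t)
  | qbar {u t} : SubTm u t → SubTm u (.qbar t)

/-- `OccT u A`: the term `u` occurs in the formula `A`. -/
inductive OccT (u : Term) : Fml → Prop
  | neg {A} : OccT u A → OccT u (.neg A)
  | impL {A B} : OccT u A → OccT u (.imp A B)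
  | impR {A B} : OccT u B → OccT u (.imp A B)
  | boxT {t A} : SubTm u t → OccT u (.box t A)
  | boxF {t A} : OccT u A → OccT u (.box t A)

/-- The term `u` occurs in (some formula of) the root set `R`. -/
def OccRoot (R : Set Fml) (u : Term) : Prop := ∃ B ∈ R, OccT u B

/-- Nodes of a tableau: JL-formulas `A`, and evidential formulas
`[t,A]` (`pos`) and `∼[t,A]` (`neg`). -/
inductive Node : Type
  | fml : Fml → Node
  | pos : Term → Fml → Node
  | neg : Term → Fml → Node
  deriving DecidableEq

/-- `TabN L cs pb cut R Γ n`: the branch `Γ` of a tableau with root set `R` has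
a closed tableau continuation using `n` rule applications.  The flag `pb`
enables the analytic rules (PB), (PB_e); the flag `cut` enables the
unrestricted cut rules (cut_f), (cut_e).  The rules (e), (e_⊥), (!), (?̄), (?)
are enabled according to the extra axioms of the logic `L`.  Base cases are the
four branch-closure conditions. -/
inductive TabN (L : Logic) (cs : ConstSpec L) (pb cut : Bool) (R : Set Fml) :
    Set Node → ℕ → Prop
  | closeF {Γ A} : Node.fml A ∈ Γ → Node.fml (.neg A) ∈ Γ → TabN L cs pb cut R Γ 0
  | closeE {Γ t A} : Node.pos t A ∈ Γ → Node.neg t A ∈ Γ → TabN L cs pb cut R Γ 0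
  | closeBot {Γ} : Node.fml .bot ∈ Γ → TabN L cs pb cut R Γ 0
  | closeCS {Γ c F} : Fml.box (.const c) F ∈ cs.set →
      Node.fml (.neg (.box (.const c) F)) ∈ Γ → TabN L cs pb cut R Γ 0
  | fNeg {Γ A n} : Node.fml (.neg (.neg A)) ∈ Γ →
      TabN L cs pb cut R (insert (Node.fml A) Γ) n → TabN L cs pb cut R Γ (n + 1)
  | fImp {Γ A B n} : Node.fml (.neg (.imp A B)) ∈ Γ →
      TabN L cs pb cut R (insert (Node.fml A) (insert (Node.fml (.neg B)) Γ)) n →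
      TabN L cs pb cut R Γ (n + 1)
  | tImp {Γ A B m n} : Node.fml (.imp A B) ∈ Γ →
      TabN L cs pb cut R (insert (Node.fml (.neg A)) Γ) m →
      TabN L cs pb cut R (insert (Node.fml B) Γ) n →
      TabN L cs pb cut R Γ (m + n + 1)
  | te {Γ t A n} : Node.fml (.box t A) ∈ Γ →
      TabN L cs pb cut R (insert (Node.pos t A) Γ) n → TabN L cs pb cut R Γ (n + 1)
  | fe {Γ t A n} : Node.fml (.neg (.box t A)) ∈ Γ →
      TabN L cs pb cut R (insert (Node.neg t A) Γ) n → TabN L cs pb cut R Γ (n + 1)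
  | plusL {Γ t s A n} : Node.neg (.sum t s) A ∈ Γ →
      TabN L cs pb cut R (insert (Node.neg t A) Γ) n → TabN L cs pb cut R Γ (n + 1)
  | plusR {Γ t s A n} : Node.neg (.sum t s) A ∈ Γ →
      TabN L cs pb cut R (insert (Node.neg s A) Γ) n → TabN L cs pb cut R Γ (n + 1)
  | appR {Γ s t A B n} : Node.pos s (.imp A B) ∈ Γ → Node.pos t A ∈ Γ →
      CSSub cs R (.imp A B) → OccRoot R (.app s t) →
      TabN L cs pb cut R (insert (Node.pos (.app s t) B) Γ) n →
      TabN L cs pb cut R Γ (n + 1)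
  | rulePB {Γ A m n} : pb = true → CSSub cs R A →
      TabN L cs pb cut R (insert (Node.fml A) Γ) m →
      TabN L cs pb cut R (insert (Node.fml (.neg A)) Γ) n →
      TabN L cs pb cut R Γ (m + n + 1)
  | rulePBe {Γ t A m n} : pb = true → CSSub cs R A → OccRoot R t →
      TabN L cs pb cut R (insert (Node.pos t A) Γ) m →
      TabN L cs pb cut R (insert (Node.neg t A) Γ) n →
      TabN L cs pb cut R Γ (m + n + 1)
  | cutF {Γ A m n} : cut = true →
      TabN L cs pb cut R (insert (Node.fml A) Γ) m →
      TabN L cs pb cut R (insert (Node.fml (.neg A)) Γ) n →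
      TabN L cs pb cut R Γ (m + n + 1)
  | cutE {Γ t A m n} : cut = true →
      TabN L cs pb cut R (insert (Node.pos t A) Γ) m →
      TabN L cs pb cut R (insert (Node.neg t A) Γ) n →
      TabN L cs pb cut R Γ (m + n + 1)
  | ruleT {Γ t A n} : L.hasT = true → Node.pos t A ∈ Γ →
      TabN L cs pb cut R (insert (Node.fml A) Γ) n → TabN L cs pb cut R Γ (n + 1)
  | ruleD {Γ t n} : L.hasD = true → Node.pos t .bot ∈ Γ →
      TabN L cs pb cut R (insert (Node.fml .bot) Γ) n → TabN L cs pb cut R Γ (n + 1)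
  | rule4 {Γ t A n} : L.has4 = true → Node.neg (.bang t) (.box t A) ∈ Γ →
      TabN L cs pb cut R (insert (Node.neg t A) Γ) n → TabN L cs pb cut R Γ (n + 1)
  | ruleB {Γ t A n} : L.hasB = true → Node.neg (.qbar t) (.neg (.box t A)) ∈ Γ →
      TabN L cs pb cut R (insert (Node.fml A) Γ) n → TabN L cs pb cut R Γ (n + 1)
  | rule5 {Γ t A n} : L.has5 = true → Node.neg (.quest t) (.neg (.box t A)) ∈ Γ →
      TabN L cs pb cut R (insert (Node.pos t A) Γ) n → TabN L cs pb cut R Γ (n + 1)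

/-- There is a closed tableau below the branch `Γ` (root set `R`). -/
def Tab (L : Logic) (cs : ConstSpec L) (pb cut : Bool) (R : Set Fml)
    (Γ : Set Node) : Prop :=
  ∃ n, TabN L cs pb cut R Γ n

/-- A tableau proof of `A`: a closed tableau whose root is `¬A`. -/
def TabProof (L : Logic) (cs : ConstSpec L) (pb cut : Bool) (A : Fml) : Prop :=
  Tab L cs pb cut {Fml.neg A} {Node.fml (Fml.neg A)}

/-- A single application of a JL^e_CS-tableau rule to the branch `Γ` (root set
`R`), producing the list of extended branches (one for a non-branching rule,
two for a branching rule). -/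
inductive RuleApp (L : Logic) (cs : ConstSpec L) (R : Set Fml) (Γ : Set Node) :
    List (Set Node) → Prop
  | fNeg {A} : Node.fml (.neg (.neg A)) ∈ Γ →
      RuleApp L cs R Γ [insert (Node.fml A) Γ]
  | fImp {A B} : Node.fml (.neg (.imp A B)) ∈ Γ →
      RuleApp L cs R Γ [insert (Node.fml A) (insert (Node.fml (.neg B)) Γ)]
  | tImp {A B} : Node.fml (.imp A B) ∈ Γ →
      RuleApp L cs R Γ [insert (Node.fml (.neg A)) Γ, insert (Node.fml B) Γ]
  | te {t A} : Node.fml (.box t A) ∈ Γ → RuleApp L cs R Γ [insert (Node.pos t A) Γ]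
  | fe {t A} : Node.fml (.neg (.box t A)) ∈ Γ →
      RuleApp L cs R Γ [insert (Node.neg t A) Γ]
  | plusL {t s A} : Node.neg (.sum t s) A ∈ Γ →
      RuleApp L cs R Γ [insert (Node.neg t A) Γ]
  | plusR {t s A} : Node.neg (.sum t s) A ∈ Γ →
      RuleApp L cs R Γ [insert (Node.neg s A) Γ]
  | appR {s t A B} : Node.pos s (.imp A B) ∈ Γ → Node.pos t A ∈ Γ →
      CSSub cs R (.imp A B) → OccRoot R (.app s t) →
      RuleApp L cs R Γ [insert (Node.pos (.app s t) B) Γ]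
  | rulePB {A} : CSSub cs R A →
      RuleApp L cs R Γ [insert (Node.fml A) Γ, insert (Node.fml (.neg A)) Γ]
  | rulePBe {t A} : CSSub cs R A → OccRoot R t →
      RuleApp L cs R Γ [insert (Node.pos t A) Γ, insert (Node.neg t A) Γ]
  | ruleT {t A} : L.hasT = true → Node.pos t A ∈ Γ →
      RuleApp L cs R Γ [insert (Node.fml A) Γ]
  | ruleD {t} : L.hasD = true → Node.pos t .bot ∈ Γ →
      RuleApp L cs R Γ [insert (Node.fml .bot) Γ]
  | rule4 {t A} : L.has4 = true → Node.neg (.bang t) (.box t A) ∈ Γ →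
      RuleApp L cs R Γ [insert (Node.neg t A) Γ]
  | ruleB {t A} : L.hasB = true → Node.neg (.qbar t) (.neg (.box t A)) ∈ Γ →
      RuleApp L cs R Γ [insert (Node.fml A) Γ]
  | rule5 {t A} : L.has5 = true → Node.neg (.quest t) (.neg (.box t A)) ∈ Γ →
      RuleApp L cs R Γ [insert (Node.pos t A) Γ]

/-- Satisfaction of tableau nodes in an M-model: `M` satisfies `[t,A]` iff
`A ∈ E(t)`, and satisfies `∼[t,A]` iff `A ∉ E(t)`. -/
def NodeSat (M : MModel) : Node → Prop
  | .fml A => M.sat A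
  | .pos t A => A ∈ M.ev t
  | .neg t A => A ∉ M.ev t

/-- Branches reachable from the initial branch by tableau rule applications. -/
inductive Reach (L : Logic) (cs : ConstSpec L) (R : Set Fml) :
    Set Node → Set Node → Prop
  | refl (Γ) : Reach L cs R Γ Γ
  | step {Γ Γ' Γ'' exts} : Reach L cs R Γ Γ' → RuleApp L cs R Γ' exts →
      Γ'' ∈ exts → Reach L cs R Γ Γ''

/-- One non-redundant tableau construction step: a rule application properly
extending the branch. -/
def Step (L : Logic) (cs : ConstSpec L) (R : Set Fml) (Γ Γ' : Set Node) : Prop :=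
  ∃ exts, RuleApp L cs R Γ exts ∧ Γ' ∈ exts ∧ Γ ⊂ Γ'

/-- The term is in the language of the logic `L` (which contains those
operations occurring in the axioms of `L`). -/
def TermInLang (L : Logic) : Term → Prop
  | .var _ => True
  | .const _ => True
  | .app s t => TermInLang L s ∧ TermInLang L t
  | .sum s t => TermInLang L s ∧ TermInLang L t
  | .bang t => L.has4 = true ∧ TermInLang L t
  | .quest t => L.has5 = true ∧ TermInLang L t
  | .qbar t => L.hasB = true ∧ TermInLang L t

/-- The formula is in the language of the logic `L`. -/
def FmlInLang (L : Logic) : Fml → Prop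
  | .prop _ => True
  | .bot => True
  | .neg A => FmlInLang L A
  | .imp A B => FmlInLang L A ∧ FmlInLang L B
  | .box t A => TermInLang L t ∧ FmlInLang L A

/-- The initial branch of a tableau for a finite set `S` of formulas. -/
def branchOf (S : Finset Fml) : Set Node := Node.fml '' (↑S : Set Fml)

end JLTab

/-!
Soundness is an induction on derivations. For completeness, let `F` be underivable. The derivable
formulas form a set closed under tautologies and modus ponens; by Zorn's lemma it extends to such a
set `T` that is maximal among those omitting `F`. Closing `T ∪ {A}` under consequence gives just
`{B | A → B ∈ T}`, so maximality puts `A → F` into `T` whenever `A ∉ T`. Hence `T` contains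
exactly one of `A`, `¬A` for each `A`. Reading `t:A ∈ T` as `A ∈ E(t)` yields an M-model whose true
formulas are exactly those of `T`: the axioms in `T` become the closure conditions on `E`, and `F`
is false in it.
-/

namespace JLTab

section Soundness

variable {L : Logic} {cs : ConstSpec L} {M : MModel} {A : Fml}

open Classical in
theorem evalProp_decide_sat (M : MModel) (A : Fml) :
    evalProp (fun B => decide (M.sat B)) A = true ↔ M.sat A := by
  induction A with
  | prop n => simp [evalProp]
  | bot => simp [evalProp, MModel.sat]
  | neg A ih => simp [evalProp, MModel.sat, ← ih]
  | imp A B ihA ihB => simp [evalProp, MModel.sat, ← ihA, ← ihB, imp_iff_not_or]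
  | box t A => simp [evalProp]

theorem IsTaut.sat (hA : IsTaut A) (M : MModel) : M.sat A :=
  (evalProp_decide_sat M A).1 (hA _)

theorem Axm.sat (hA : Axm L A) (hM : IsModel L cs M) : M.sat A := by
  cases hA with
  | taut hA => exact hA.sat M
  | sumL => exact @hM.e2l _ _ _
  | sumR => exact @hM.e2r _ _ _
  | jK => exact hM.e1 _ _ _ _
  | jT hL => exact hM.e4 hL _ _
  | jD hL => exact hM.e5 hL _
  | j4 hL => exact hM.e6 hL _ _
  | jB hL => exact hM.e7 hL _ _
  | j5 hL => exact hM.e8 hL _ _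

theorem IsModel.sat_of_mem_set (hM : IsModel L cs M) (hA : A ∈ cs.set) : M.sat A := by
  cases cs.mem_ian A hA with
  | base _ => exact hM.e3 _ _ hA
  | step _ => exact hM.e3 _ _ hA

theorem Deriv.valid (hA : Deriv L cs A) : Valid L cs A := by
  intro M hM
  induction hA with
  | axm hA => exact hA.sat hM
  | mp _ _ ihImp ihA => exact ihImp ihA
  | ian hA => exact hM.sat_of_mem_set hA

end Soundness

section Tautologies

variable (A B C : Fml)

theorem isTaut_imp_self : IsTaut (.imp A A) := fun v => by
  simp [evalProp]

theorem isTaut_imp_imp_left : IsTaut (.imp A (.imp B A)) := fun v => by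
  cases hA : evalProp v A <;> simp [evalProp, hA]

theorem isTaut_imp_distrib :
    IsTaut (.imp (.imp A (.imp B C)) (.imp (.imp A B) (.imp A C))) := fun v => by
  cases hA : evalProp v A <;> cases hB : evalProp v B <;> simp [evalProp, hA, hB]

theorem isTaut_neg_imp_imp : IsTaut (.imp (.neg A) (.imp A B)) := fun v => by
  cases hA : evalProp v A <;> simp [evalProp, hA]

theorem isTaut_imp_neg_imp_imp :
    IsTaut (.imp (.imp A B) (.imp (.imp (.neg A) B) B)) := fun v => by
  cases hA : evalProp v A <;> cases hB : evalProp v B <;> simp [evalProp, hA, hB]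

theorem isTaut_neg_bot : IsTaut (.neg .bot) := fun _ => rfl

end Tautologies

/-- A set of formulas closed under propositional consequence. It need not be consistent, nor
contain the axioms of any justification logic. -/
structure IsTheory (T : Set Fml) : Prop where
  taut_mem {A : Fml} : IsTaut A → A ∈ T
  mp_mem {A B : Fml} : .imp A B ∈ T → A ∈ T → B ∈ T

/-- A theory deciding every formula in exactly one way; the complete theories play the role of
the maximal consistent sets. -/
structure IsCompleteTheory (T : Set Fml) : Prop extends IsTheory T where
  neg_mem_iff {A : Fml} : .neg A ∈ T ↔ A ∉ T

section Lindenbaum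

variable {T : Set Fml} {F : Fml}

theorem isTheory_setOf_deriv (L : Logic) (cs : ConstSpec L) : IsTheory {A | Deriv L cs A} where
  taut_mem hA := .axm (.taut hA)
  mp_mem hAB hA := .mp hAB hA

theorem IsTheory.sUnion_of_isChain {c : Set (Set Fml)} (hc : ∀ S ∈ c, IsTheory S)
    (hchain : IsChain (· ⊆ ·) c) (hne : c.Nonempty) : IsTheory (⋃₀ c) where
  taut_mem hA :=
    let ⟨S, hS⟩ := hne
    ⟨S, hS, (hc S hS).taut_mem hA⟩
  mp_mem := by
    rintro A B ⟨S, hS, hAB⟩ ⟨S', hS', hA⟩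
    obtain ⟨U, hU, hSU, hS'U⟩ := hchain.directedOn S hS S' hS'
    exact ⟨U, hU, (hc U hU).mp_mem (hSU hAB) (hS'U hA)⟩

theorem IsTheory.imp_mem_of_mem (hT : IsTheory T) (A : Fml) {B : Fml} (hB : B ∈ T) :
    .imp A B ∈ T :=
  hT.mp_mem (hT.taut_mem (isTaut_imp_imp_left B A)) hB

theorem IsTheory.setOf_imp_mem (hT : IsTheory T) (A : Fml) : IsTheory {B | .imp A B ∈ T} where
  taut_mem hB := hT.imp_mem_of_mem A (hT.taut_mem hB)
  mp_mem {B C} hABC hAB :=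
    hT.mp_mem (hT.mp_mem (hT.taut_mem (isTaut_imp_distrib A B C)) hABC) hAB

theorem IsTheory.exists_maximal_notMem (hT : IsTheory T) (hF : F ∉ T) :
    ∃ U, T ⊆ U ∧ Maximal (fun S => IsTheory S ∧ F ∉ S) U := by
  refine zorn_subset_nonempty {S | IsTheory S ∧ F ∉ S} (fun c hc hchain hne => ?_) T ⟨hT, hF⟩
  refine ⟨⋃₀ c, ⟨?_, ?_⟩, fun S hS => Set.subset_sUnion_of_mem hS⟩
  · exact IsTheory.sUnion_of_isChain (fun S hS => (hc hS).1) hchain hne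
  · rintro ⟨S, hS, hFS⟩
    exact (hc hS).2 hFS

theorem imp_mem_of_maximal (hT : Maximal (fun S => IsTheory S ∧ F ∉ S) T) {A : Fml}
    (hA : A ∉ T) : .imp A F ∈ T := by
  by_contra hAF
  have hsub : T ⊆ {B | .imp A B ∈ T} := fun _ hB => hT.prop.1.imp_mem_of_mem A hB
  have hmem : A ∈ {B | .imp A B ∈ T} := hT.prop.1.taut_mem (isTaut_imp_self A)
  exact hA (hT.le_of_ge ⟨hT.prop.1.setOf_imp_mem A, hAF⟩ hsub hmem)

theorem isCompleteTheory_of_maximal (hT : Maximal (fun S => IsTheory S ∧ F ∉ S) T) :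
    IsCompleteTheory T := by
  obtain ⟨hTheory, hF⟩ := hT.prop
  refine { hTheory with neg_mem_iff := fun {A} => ⟨fun hneg hA => hF ?_, fun hA => ?_⟩ }
  · exact hTheory.mp_mem (hTheory.mp_mem (hTheory.taut_mem (isTaut_neg_imp_imp A F)) hneg) hA
  · by_contra hneg
    have hcases := hTheory.taut_mem (isTaut_imp_neg_imp_imp A F)
    exact hF <| hTheory.mp_mem (hTheory.mp_mem hcases (imp_mem_of_maximal hT hA))
      (imp_mem_of_maximal hT hneg)

theorem IsTheory.exists_isCompleteTheory (hT : IsTheory T) (hF : F ∉ T) :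
    ∃ U, T ⊆ U ∧ IsCompleteTheory U ∧ F ∉ U :=
  let ⟨U, hTU, hU⟩ := hT.exists_maximal_notMem hF
  ⟨U, hTU, isCompleteTheory_of_maximal hU, hU.prop.2⟩

end Lindenbaum

namespace IsCompleteTheory

variable {T : Set Fml}

theorem bot_notMem (hT : IsCompleteTheory T) : .bot ∉ T :=
  hT.neg_mem_iff.1 (hT.taut_mem isTaut_neg_bot)

theorem imp_mem_iff (hT : IsCompleteTheory T) {A B : Fml} : .imp A B ∈ T ↔ (A ∈ T → B ∈ T) := by
  refine ⟨hT.mp_mem, fun h => ?_⟩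
  by_cases hA : A ∈ T
  · exact hT.imp_mem_of_mem A (h hA)
  · exact hT.mp_mem (hT.taut_mem (isTaut_neg_imp_imp A B)) (hT.neg_mem_iff.2 hA)

end IsCompleteTheory

/-- The canonical M-model of `T`, in which `t` is admissible evidence for `A` iff `t:A ∈ T`. -/
def canonicalModel (T : Set Fml) : MModel where
  ev t := {A | .box t A ∈ T}
  val n := .prop n ∈ T

section Completeness

variable {L : Logic} {cs : ConstSpec L} {T : Set Fml} {F : Fml}

theorem IsCompleteTheory.canonicalModel_sat_iff (hT : IsCompleteTheory T) (A : Fml) :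
    (canonicalModel T).sat A ↔ A ∈ T := by
  induction A with
  | prop n => exact Iff.rfl
  | bot => exact iff_of_false id hT.bot_notMem
  | neg A ih => exact (not_congr ih).trans hT.neg_mem_iff.symm
  | imp A B ihA ihB => exact (imp_congr ihA ihB).trans hT.imp_mem_iff.symm
  | box t A => exact Iff.rfl

theorem IsCompleteTheory.isModel_canonicalModel (hT : IsCompleteTheory T)
    (hderiv : {A | Deriv L cs A} ⊆ T) : IsModel L cs (canonicalModel T) := by
  have axm_mp {A B : Fml} (hAB : Axm L (.imp A B)) (hA : A ∈ T) : B ∈ T :=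
    hT.mp_mem (hderiv (.axm hAB)) hA
  have neg_mem_of_not_sat {A : Fml} (hA : ¬ (canonicalModel T).sat A) : .neg A ∈ T :=
    hT.neg_mem_iff.2 (mt (hT.canonicalModel_sat_iff A).2 hA)
  exact {
    e1 := fun s t A B hAB hA => hT.mp_mem (axm_mp .jK hAB) hA
    e2l := fun s t A hA => axm_mp .sumL hA
    e2r := fun s t A hA => axm_mp .sumR hA
    e3 := fun c A hA => hderiv (.ian hA)
    e4 := fun hL t A hA => (hT.canonicalModel_sat_iff A).2 (axm_mp (.jT hL) hA)
    e5 := fun hL t hbot => hT.bot_notMem (axm_mp (.jD hL) hbot)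
    e6 := fun hL t A hA => axm_mp (.j4 hL) hA
    e7 := fun hL t A hA => axm_mp (.jB hL) (neg_mem_of_not_sat hA)
    e8 := fun hL t A hA => axm_mp (.j5 hL) (hT.neg_mem_iff.2 hA) }

theorem IsTheory.exists_isModel_not_sat (hT : IsTheory T) (hderiv : {A | Deriv L cs A} ⊆ T)
    (hF : F ∉ T) : ∃ M, IsModel L cs M ∧ (∀ A ∈ T, M.sat A) ∧ ¬ M.sat F := by
  obtain ⟨U, hTU, hU, hFU⟩ := hT.exists_isCompleteTheory hF
  exact ⟨canonicalModel U, hU.isModel_canonicalModel (hderiv.trans hTU),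
    fun A hA => (hU.canonicalModel_sat_iff A).2 (hTU hA), mt (hU.canonicalModel_sat_iff F).1 hFU⟩

theorem Valid.deriv (hF : Valid L cs F) : Deriv L cs F := by
  by_contra hnot
  obtain ⟨M, hM, -, hMF⟩ := (isTheory_setOf_deriv L cs).exists_isModel_not_sat subset_rfl hnot
  exact hMF (hF M hM)

end Completeness

end JLTab

/-- Theorem 1: For any justification logic JL (J plus any
combination of jT, jD, j4, jB, j5) and any constant specification CS for JL, a
JL-formula F is provable in the Hilbert system JL_CS iff F is JL_CS-valid. -/
theorem JLTab.hilbert_soundness_completeness (L : Logic) (cs : ConstSpec L) (F : Fml) :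
    Deriv L cs F ↔ Valid L cs F :=
  ⟨Deriv.valid, Valid.deriv⟩
end

section
/- Let π be any branch of a JL^e_CS-tableau and M be a JL_CS M-model that satisfies all the formulas occurring in π. If a JL^e_CS-tableau rule is applied to π, then the application produces at least one extension π′ such that M satisfies all the formulas occurring in π′. -/
/-!
Every rule is locally sound. The rules for evidential formulas restate the conditions on an
admissible evidence function, read contrapositively when the premise is some `∼[t,A]`, and each
branching rule offers two alternatives that are jointly exhaustive in any model that satisfies the
premise. As rules only add nodes, satisfying the new nodes of one extension suffices.
-/

namespace JLTab

variable {L : Logic} {cs cs' : ConstSpec L} {R : Set Fml} {Γ : Set Node} {M : MModel}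
  {φ ψ : Node} {A B : Fml} {s t : Term}

theorem nodeSat_fml_neg_neg : NodeSat M (.fml (.neg (.neg A))) ↔ NodeSat M (.fml A) :=
  not_not

theorem nodeSat_fml_imp :
    NodeSat M (.fml (.imp A B)) ↔ NodeSat M (.fml (.neg A)) ∨ NodeSat M (.fml B) :=
  imp_iff_not_or

theorem nodeSat_fml_neg_imp :
    NodeSat M (.fml (.neg (.imp A B))) ↔ NodeSat M (.fml A) ∧ NodeSat M (.fml (.neg B)) :=
  Classical.not_imp

theorem nodeSat_fml_or_fml_neg (M : MModel) (A : Fml) :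
    NodeSat M (.fml A) ∨ NodeSat M (.fml (.neg A)) :=
  Classical.em (M.sat A)

theorem nodeSat_fml_box : NodeSat M (.fml (.box t A)) ↔ NodeSat M (.pos t A) :=
  Iff.rfl

theorem nodeSat_fml_neg_box : NodeSat M (.fml (.neg (.box t A))) ↔ NodeSat M (.neg t A) :=
  Iff.rfl

theorem nodeSat_pos_or_neg (M : MModel) (t : Term) (A : Fml) :
    NodeSat M (.pos t A) ∨ NodeSat M (.neg t A) :=
  Classical.em (A ∈ M.ev t)

namespace IsModel

theorem nodeSat_pos_app (hM : IsModel L cs M) (hs : NodeSat M (.pos s (.imp A B)))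
    (ht : NodeSat M (.pos t A)) : NodeSat M (.pos (.app s t) B) :=
  hM.e1 s t A B hs ht

theorem nodeSat_neg_left_of_sum (hM : IsModel L cs M) (h : NodeSat M (.neg (.sum s t) A)) :
    NodeSat M (.neg s A) :=
  mt (@hM.e2l s t A) h

theorem nodeSat_neg_right_of_sum (hM : IsModel L cs M) (h : NodeSat M (.neg (.sum s t) A)) :
    NodeSat M (.neg t A) :=
  mt (@hM.e2r s t A) h

theorem nodeSat_fml_of_pos (hM : IsModel L cs M) (hT : L.hasT = true)
    (h : NodeSat M (.pos t A)) : NodeSat M (.fml A) :=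
  hM.e4 hT t A h

theorem not_nodeSat_pos_bot (hM : IsModel L cs M) (hD : L.hasD = true) :
    ¬ NodeSat M (.pos t .bot) :=
  hM.e5 hD t

theorem nodeSat_neg_of_bang (hM : IsModel L cs M) (h4 : L.has4 = true)
    (h : NodeSat M (.neg (.bang t) (.box t A))) : NodeSat M (.neg t A) :=
  mt (hM.e6 h4 t A) h

theorem nodeSat_fml_of_qbar (hM : IsModel L cs M) (hB : L.hasB = true)
    (h : NodeSat M (.neg (.qbar t) (.neg (.box t A)))) : NodeSat M (.fml A) :=
  not_imp_comm.1 (hM.e7 hB t A) h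

theorem nodeSat_pos_of_quest (hM : IsModel L cs M) (h5 : L.has5 = true)
    (h : NodeSat M (.neg (.quest t) (.neg (.box t A)))) : NodeSat M (.pos t A) :=
  not_imp_comm.1 (hM.e8 h5 t A) h

end IsModel

/-- Satisfaction of a tableau branch in an M-model. A branch is encoded as the set of the nodes
occurring on it, all of which have to be satisfied. -/
def BranchSat (M : MModel) (Γ : Set Node) : Prop :=
  ∀ φ ∈ Γ, NodeSat M φ

namespace BranchSat

protected theorem insert (hΓ : BranchSat M Γ) (hφ : NodeSat M φ) : BranchSat M (insert φ Γ) :=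
  Set.forall_mem_insert.2 ⟨hφ, hΓ⟩

theorem exists_insert (hΓ : BranchSat M Γ) (hφ : NodeSat M φ) :
    ∃ Γ' ∈ [insert φ Γ], BranchSat M Γ' :=
  ⟨_, List.mem_singleton_self _, hΓ.insert hφ⟩

theorem exists_insert_pair (hΓ : BranchSat M Γ) (h : NodeSat M φ ∨ NodeSat M ψ) :
    ∃ Γ' ∈ [insert φ Γ, insert ψ Γ], BranchSat M Γ' :=
  h.elim (fun hφ => ⟨_, List.mem_cons_self, hΓ.insert hφ⟩)
    (fun hψ => ⟨_, List.mem_cons_of_mem _ List.mem_cons_self, hΓ.insert hψ⟩)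

end BranchSat

theorem rule_application_soundness_general {exts : List (Set Node)} (hM : IsModel L cs' M)
    (hΓ : BranchSat M Γ) (happ : RuleApp L cs R Γ exts) : ∃ Γ' ∈ exts, BranchSat M Γ' := by
  cases happ with
  | fNeg h => exact hΓ.exists_insert (nodeSat_fml_neg_neg.1 (hΓ _ h))
  | fImp h =>
    obtain ⟨hA, hB⟩ := nodeSat_fml_neg_imp.1 (hΓ _ h)
    exact (hΓ.insert hB).exists_insert hA
  | tImp h => exact hΓ.exists_insert_pair (nodeSat_fml_imp.1 (hΓ _ h))
  | te h => exact hΓ.exists_insert (nodeSat_fml_box.1 (hΓ _ h))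
  | fe h => exact hΓ.exists_insert (nodeSat_fml_neg_box.1 (hΓ _ h))
  | plusL h => exact hΓ.exists_insert (hM.nodeSat_neg_left_of_sum (hΓ _ h))
  | plusR h => exact hΓ.exists_insert (hM.nodeSat_neg_right_of_sum (hΓ _ h))
  | appR hs ht => exact hΓ.exists_insert (hM.nodeSat_pos_app (hΓ _ hs) (hΓ _ ht))
  | rulePB => exact hΓ.exists_insert_pair (nodeSat_fml_or_fml_neg M _)
  | rulePBe => exact hΓ.exists_insert_pair (nodeSat_pos_or_neg M _ _)
  | ruleT hT h => exact hΓ.exists_insert (hM.nodeSat_fml_of_pos hT (hΓ _ h))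
  | ruleD hD h => exact absurd (hΓ _ h) (hM.not_nodeSat_pos_bot hD)
  | rule4 h4 h => exact hΓ.exists_insert (hM.nodeSat_neg_of_bang h4 (hΓ _ h))
  | ruleB hB h => exact hΓ.exists_insert (hM.nodeSat_fml_of_qbar hB (hΓ _ h))
  | rule5 h5 h => exact hΓ.exists_insert (hM.nodeSat_pos_of_quest h5 (hΓ _ h))

end JLTab

/-- If an M-model of JL_CS satisfies all formulas on a tableau
branch, then any JL^e_CS-tableau rule application to the branch produces at
least one extension all of whose formulas the model satisfies. -/
theorem JLTab.rule_application_soundness (L : Logic) (cs : ConstSpec L) (R : Set Fml)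
    (Γ : Set Node) (exts : List (Set Node)) (M : MModel)
    (hM : IsModel L cs M) (hΓ : ∀ φ ∈ Γ, NodeSat M φ)
    (happ : RuleApp L cs R Γ exts) :
    ∃ Γ' ∈ exts, ∀ φ ∈ Γ', NodeSat M φ :=
  rule_application_soundness_general hM hΓ happ
end

section
/- Subformula property: in any JL^e_CS-tableau proof, every JL-formula occurring in the proof is a weak CS-subformula of the root of the tableau; every JL-formula occurring inside an evidential formula [t,A] or ∼[t,A] is a CS-subformula of the root; and every term occurring inside an evidential formula occurs in the root or in a formula in CS. -/
/-!
A weak CS-subformula `¬A` has its body `A` among the CS-subformulas, whether `¬A` is itself a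
CS-subformula or only the negation of one, and a weak CS-subformula which is not a negation is a
CS-subformula. Hence decomposing a formula of the branch stays within the weak CS-subformulas, while
the rules which could leave them, (·), (PB) and (PB_e), are kept inside by their side conditions.
The terms of evidential formulas come from boxed CS-subformulas or from these side conditions, and
the remaining rules only pass to subterms.
-/

namespace JLTab

variable {L : Logic} {cs : ConstSpec L} {R S : Set Fml} {Γ Γ' : Set Node}
  {A B C : Fml} {s t u : Term}

theorem Subf.trans (hAB : Subf A B) (hBC : Subf B C) : Subf A C := by
  induction hBC with
  | refl => exact hAB
  | neg _ ih => exact .neg ih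
  | impL _ ih => exact .impL ih
  | impR _ ih => exact .impR ih
  | box _ ih => exact .box ih

theorem SubTm.trans (hus : SubTm u s) (hst : SubTm s t) : SubTm u t := by
  induction hst with
  | refl => exact hus
  | appL _ ih => exact .appL ih
  | appR _ ih => exact .appR ih
  | sumL _ ih => exact .sumL ih
  | sumR _ ih => exact .sumR ih
  | bang _ ih => exact .bang ih
  | quest _ ih => exact .quest ih
  | qbar _ ih => exact .qbar ih

theorem OccT.of_subTm (ht : OccT t A) (hst : SubTm s t) : OccT s A := by
  induction ht with
  | neg _ ih => exact .neg ih
  | impL _ ih => exact .impL ih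
  | impR _ ih => exact .impR ih
  | boxT h => exact .boxT (hst.trans h)
  | boxF _ ih => exact .boxF ih

theorem Subf.occT (hAB : Subf A B) (ht : OccT t A) : OccT t B := by
  induction hAB with
  | refl => exact ht
  | neg _ ih => exact .neg ih
  | impL _ ih => exact .impL ih
  | impR _ ih => exact .impR ih
  | box _ ih => exact .boxF ih

theorem OccRoot.of_subTm (ht : OccRoot R t) (hst : SubTm s t) : OccRoot R s :=
  let ⟨B, hB, htB⟩ := ht
  ⟨B, hB, htB.of_subTm hst⟩

theorem occRoot_union : OccRoot (R ∪ S) t ↔ OccRoot R t ∨ OccRoot S t := by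
  simp only [OccRoot, Set.mem_union, or_and_right, exists_or]

theorem cssub_iff : CSSub cs R A ↔ ∃ B ∈ R ∪ cs.set, Subf A B := by
  simp only [CSSub, Set.mem_union, or_and_right, exists_or]

namespace CSSub

theorem of_mem (hA : A ∈ R) : CSSub cs R A :=
  .inl ⟨A, hA, .refl A⟩

theorem of_subf (hB : CSSub cs R B) (hAB : Subf A B) : CSSub cs R A :=
  let ⟨C, hC, hBC⟩ := cssub_iff.1 hB
  cssub_iff.2 ⟨C, hC, hAB.trans hBC⟩

theorem of_neg (h : CSSub cs R (.neg A)) : CSSub cs R A :=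
  h.of_subf (.neg (.refl A))

theorem of_imp_left (h : CSSub cs R (.imp A B)) : CSSub cs R A :=
  h.of_subf (.impL (.refl A))

theorem of_imp_right (h : CSSub cs R (.imp A B)) : CSSub cs R B :=
  h.of_subf (.impR (.refl B))

theorem of_box (h : CSSub cs R (.box t A)) : CSSub cs R A :=
  h.of_subf (.box (.refl A))

theorem occRoot_of_box (h : CSSub cs R (.box t A)) : OccRoot (R ∪ cs.set) t :=
  let ⟨B, hB, hsub⟩ := cssub_iff.1 h
  ⟨B, hB, hsub.occT (.boxT (.refl t))⟩

theorem weakCSSub (h : CSSub cs R A) : WeakCSSub cs R A :=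
  .inl h

theorem weakCSSub_neg (h : CSSub cs R A) : WeakCSSub cs R (.neg A) :=
  .inr ⟨A, rfl, h⟩

end CSSub

namespace WeakCSSub

theorem of_neg : WeakCSSub cs R (.neg A) → CSSub cs R A
  | .inl h => h.of_neg
  | .inr ⟨_, rfl, h⟩ => h

theorem cssub_of_ne_neg (h : WeakCSSub cs R A) (hA : ∀ C, A ≠ .neg C) : CSSub cs R A :=
  h.resolve_right fun ⟨C, hC, _⟩ => hA C hC

end WeakCSSub

/-- The invariant for the evidential formulas `[t,A]` and `∼[t,A]`, the same for both signs: `A` is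
a CS-subformula of the root set, and `t` occurs in the root set or in CS. -/
structure AnalyticEvidence (cs : ConstSpec L) (R : Set Fml) (t : Term) (A : Fml) : Prop where
  cssub : CSSub cs R A
  occRoot : OccRoot (R ∪ cs.set) t

theorem CSSub.analyticEvidence (h : CSSub cs R (.box t A)) : AnalyticEvidence cs R t A :=
  ⟨h.of_box, h.occRoot_of_box⟩

theorem AnalyticEvidence.of_occRoot (hA : CSSub cs R A) (ht : OccRoot R t) :
    AnalyticEvidence cs R t A :=
  ⟨hA, occRoot_union.2 (.inl ht)⟩

theorem AnalyticEvidence.of_subTm (h : AnalyticEvidence cs R t A) (hst : SubTm s t) :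
    AnalyticEvidence cs R s A :=
  ⟨h.cssub, h.occRoot.of_subTm hst⟩

/-- A tableau node is analytic if it satisfies the bound that the subformula property asserts for
nodes of its kind. -/
def Node.IsAnalytic (cs : ConstSpec L) (R : Set Fml) : Node → Prop
  | .fml A => WeakCSSub cs R A
  | .pos t A | .neg t A => AnalyticEvidence cs R t A

/-- A branch is analytic if all its nodes are; this is the invariant of tableau construction. -/
def IsAnalyticBranch (cs : ConstSpec L) (R : Set Fml) (Γ : Set Node) : Prop :=
  ∀ φ ∈ Γ, φ.IsAnalytic cs R

theorem isAnalyticBranch_insert {φ : Node} :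
    IsAnalyticBranch cs R (insert φ Γ) ↔ φ.IsAnalytic cs R ∧ IsAnalyticBranch cs R Γ :=
  Set.forall_mem_insert

theorem isAnalyticBranch_image_fml : IsAnalyticBranch cs R (Node.fml '' R) :=
  Set.forall_mem_image.2 fun _ hA => (CSSub.of_mem hA).weakCSSub

theorem RuleApp.isAnalyticBranch {exts : List (Set Node)} (hr : RuleApp L cs R Γ exts)
    (h : IsAnalyticBranch cs R Γ) : ∀ Γ' ∈ exts, IsAnalyticBranch cs R Γ' := by
  have fml {A} : Node.fml A ∈ Γ → WeakCSSub cs R A := h _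
  have pos {t A} : Node.pos t A ∈ Γ → AnalyticEvidence cs R t A := h _
  have neg {t A} : Node.neg t A ∈ Γ → AnalyticEvidence cs R t A := h _
  cases hr <;>
    simp only [List.forall_mem_cons, List.not_mem_nil, false_imp_iff, implies_true,
      isAnalyticBranch_insert, h, and_true, Node.IsAnalytic]
  case fNeg hA => exact (fml hA).of_neg.of_neg.weakCSSub
  case fImp hAB =>
    have hAB := (fml hAB).of_neg
    exact ⟨hAB.of_imp_left.weakCSSub, hAB.of_imp_right.weakCSSub_neg⟩
  case tImp hAB =>
    have hAB := (fml hAB).cssub_of_ne_neg nofun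
    exact ⟨hAB.of_imp_left.weakCSSub_neg, hAB.of_imp_right.weakCSSub⟩
  case te hA => exact ((fml hA).cssub_of_ne_neg nofun).analyticEvidence
  case fe hA => exact (fml hA).of_neg.analyticEvidence
  case plusL hA => exact (neg hA).of_subTm (.sumL (.refl _))
  case plusR hA => exact (neg hA).of_subTm (.sumR (.refl _))
  case appR hAB hst => exact .of_occRoot hAB.of_imp_right hst
  case rulePB hA => exact ⟨hA.weakCSSub, hA.weakCSSub_neg⟩
  case rulePBe hA ht => exact ⟨.of_occRoot hA ht, .of_occRoot hA ht⟩
  case ruleT hA => exact (pos hA).cssub.weakCSSub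
  case ruleD hA => exact (pos hA).cssub.weakCSSub
  case rule4 hA => exact (neg hA).cssub.analyticEvidence
  case ruleB hA => exact (neg hA).cssub.of_neg.of_box.weakCSSub
  case rule5 hA => exact (neg hA).cssub.of_neg.analyticEvidence

theorem Reach.isAnalyticBranch (hr : Reach L cs R Γ Γ') (h : IsAnalyticBranch cs R Γ) :
    IsAnalyticBranch cs R Γ' := by
  induction hr with
  | refl => exact h
  | step _ happ hmem ih => exact happ.isAnalyticBranch ih _ hmem

theorem subformula_property_general (L : Logic) (cs : ConstSpec L) (R : Set Fml) (Γ : Set Node)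
    (h : Reach L cs R (Node.fml '' R) Γ) :
    ∀ φ ∈ Γ,
      (∀ B, φ = Node.fml B → WeakCSSub cs R B) ∧
      (∀ t B, φ = Node.pos t B ∨ φ = Node.neg t B →
        CSSub cs R B ∧ (OccRoot R t ∨ ∃ F ∈ cs.set, OccT t F)) := by
  intro φ hφ
  have hφ : φ.IsAnalytic cs R := h.isAnalyticBranch isAnalyticBranch_image_fml φ hφ
  constructor
  · rintro B rfl
    exact hφ
  · rintro t B (rfl | rfl) <;> exact ⟨hφ.cssub, occRoot_union.1 hφ.occRoot⟩

end JLTab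

/-- Theorem 8, Subformula property: on any branch of a
JL^e_CS-tableau with root ¬A, every JL-formula is a weak CS-subformula of the
root, every JL-formula inside an evidential formula is a CS-subformula of the
root, and every term inside an evidential formula occurs in the root or in a
formula of CS. -/
theorem JLTab.subformula_property (L : Logic) (cs : ConstSpec L) (A : Fml)
    (Γ : Set Node)
    (h : Reach L cs {Fml.neg A} {Node.fml (Fml.neg A)} Γ) :
    ∀ φ ∈ Γ,
      (∀ B, φ = Node.fml B → WeakCSSub cs {Fml.neg A} B) ∧
      (∀ t B, φ = Node.pos t B ∨ φ = Node.neg t B →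
        CSSub cs {Fml.neg A} B ∧
          (OccT t (Fml.neg A) ∨ ∃ F ∈ cs.set, OccT t F)) := by
  simpa only [OccRoot, Set.mem_singleton_iff, exists_eq_left] using
    subformula_property_general L cs {.neg A} Γ (by rwa [Set.image_singleton])
end

section
/- Every axiom instance of JL is provable in the tableau system JL^e_CS without using the rules (PB), (PB_e), or (cut): for each axiom instance A of JL there is a closed tableau with root ¬A built using only the non-branching-to-arbitrary-formula rules. -/
/-!
The axioms other than tautologies have explicit short tableaux. For a tautology `A`, decompose `¬A`
with the propositional rules, in continuation-passing style: a branch containing a formula closes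
as soon as all its extensions whose literals entail that formula close. This goes through by
structural induction on formulas. If the literals of an extension entail `¬A`, no valuation makes
them all true, so two of them are complementary.
-/

namespace JLTab

variable {L : Logic} {cs : ConstSpec L} {pb cut : Bool} {R : Set Fml} {Γ Δ : Set Node}
  {A B : Fml}

section Tautologies

/-- The valuation `v` makes true every literal on the branch `Γ`. Letting `A` range over all
formulas instead of the atoms only is harmless: `evalProp v` ignores the values of `v` at compound
formulas, and a branch on which these values conflict is already closed. -/
def Agrees (v : Fml → Bool) (Γ : Set Node) : Prop :=
  ∀ A, (Node.fml A ∈ Γ → v A = true) ∧ (Node.fml (.neg A) ∈ Γ → v A = false)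

/-- Propositional entailment of `A` by the literals on the branch `Γ`. -/
def LitEntails (Γ : Set Node) (A : Fml) : Prop :=
  ∀ v, Agrees v Γ → evalProp v A = true

variable (L cs pb cut R) in
/-- Tableau rules reduce closing a branch that contains `A` to closing its extensions whose
literals entail `A`. Quantifying over all such extensions, instead of those actually produced by
the rules, avoids any need for weakening of tableaux. -/
def Decomposable (A : Fml) : Prop :=
  ∀ Γ, Node.fml A ∈ Γ → (∀ Δ, Γ ⊆ Δ → LitEntails Δ A → Tab L cs pb cut R Δ) →
    Tab L cs pb cut R Γ

theorem Agrees.anti {v : Fml → Bool} (hΓΔ : Γ ⊆ Δ) (hv : Agrees v Δ) : Agrees v Γ :=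
  fun A => ⟨fun hA => (hv A).1 (hΓΔ hA), fun hA => (hv A).2 (hΓΔ hA)⟩

theorem LitEntails.mono (hΓΔ : Γ ⊆ Δ) (hA : LitEntails Γ A) : LitEntails Δ A :=
  fun v hv => hA v (hv.anti hΓΔ)

theorem LitEntails.neg_neg (hA : LitEntails Γ A) : LitEntails Γ (.neg (.neg A)) :=
  fun v hv => by simpa [evalProp] using hA v hv

theorem LitEntails.imp_of_neg_left (hA : LitEntails Γ (.neg A)) : LitEntails Γ (.imp A B) :=
  fun v hv => Bool.or_eq_true_iff.2 (.inl (hA v hv))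

theorem LitEntails.imp_of_right (hB : LitEntails Γ B) : LitEntails Γ (.imp A B) :=
  fun v hv => Bool.or_eq_true_iff.2 (.inr (hB v hv))

theorem LitEntails.neg_imp (hA : LitEntails Γ A) (hB : LitEntails Γ (.neg B)) :
    LitEntails Γ (.neg (.imp A B)) :=
  fun v hv => by simpa [evalProp] using And.intro (hA v hv) (hB v hv)

theorem tab_of_forall_not_agrees (h : ∀ v, ¬ Agrees v Γ) : Tab L cs pb cut R Γ := by
  classical
  by_contra hopen
  have hconsistent : ∀ A, Node.fml (.neg A) ∈ Γ → Node.fml A ∉ Γ :=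
    fun A hneg hpos => hopen ⟨0, .closeF hpos hneg⟩
  exact h (fun A => decide (Node.fml A ∈ Γ)) fun A =>
    ⟨decide_eq_true, fun hA => decide_eq_false (hconsistent A hA)⟩

theorem decomposable_of_litEntails (h : ∀ Γ, Node.fml A ∈ Γ → LitEntails Γ A) :
    Decomposable L cs pb cut R A :=
  fun Γ hA hclose => hclose Γ subset_rfl (h Γ hA)

theorem decomposable_prop (n : ℕ) : Decomposable L cs pb cut R (.prop n) :=
  decomposable_of_litEntails fun _ hΓ _ hv => (hv _).1 hΓ

theorem decomposable_neg_prop (n : ℕ) : Decomposable L cs pb cut R (.neg (.prop n)) :=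
  decomposable_of_litEntails fun _ hΓ _ hv => by simp [evalProp, (hv _).2 hΓ]

theorem decomposable_box (t : Term) (A : Fml) : Decomposable L cs pb cut R (.box t A) :=
  decomposable_of_litEntails fun _ hΓ _ hv => (hv _).1 hΓ

theorem decomposable_neg_box (t : Term) (A : Fml) :
    Decomposable L cs pb cut R (.neg (.box t A)) :=
  decomposable_of_litEntails fun _ hΓ _ hv => by simp [evalProp, (hv _).2 hΓ]

theorem decomposable_bot : Decomposable L cs pb cut R .bot :=
  fun _ hbot _ => ⟨0, .closeBot hbot⟩

theorem decomposable_neg_bot : Decomposable L cs pb cut R (.neg .bot) :=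
  decomposable_of_litEntails fun _ _ _ _ => rfl

theorem Decomposable.neg_neg (hA : Decomposable L cs pb cut R A) :
    Decomposable L cs pb cut R (.neg (.neg A)) := by
  intro Γ hΓ hclose
  obtain ⟨_, hn⟩ := hA (insert (.fml A) Γ) (.inl rfl) fun Δ hΔ hent =>
    hclose Δ ((Set.subset_insert _ _).trans hΔ) hent.neg_neg
  exact ⟨_, .fNeg hΓ hn⟩

theorem Decomposable.imp (hA : Decomposable L cs pb cut R (.neg A))
    (hB : Decomposable L cs pb cut R B) : Decomposable L cs pb cut R (.imp A B) := by
  intro Γ hΓ hclose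
  obtain ⟨_, hleft⟩ := hA (insert (.fml (.neg A)) Γ) (.inl rfl) fun Δ hΔ hent =>
    hclose Δ ((Set.subset_insert _ _).trans hΔ) hent.imp_of_neg_left
  obtain ⟨_, hright⟩ := hB (insert (.fml B) Γ) (.inl rfl) fun Δ hΔ hent =>
    hclose Δ ((Set.subset_insert _ _).trans hΔ) hent.imp_of_right
  exact ⟨_, .tImp hΓ hleft hright⟩

theorem Decomposable.neg_imp (hA : Decomposable L cs pb cut R A)
    (hB : Decomposable L cs pb cut R (.neg B)) :
    Decomposable L cs pb cut R (.neg (.imp A B)) := by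
  intro Γ hΓ hclose
  have hΓ' : Γ ⊆ insert (.fml A) (insert (.fml (.neg B)) Γ) := fun _ h => .inr (.inr h)
  obtain ⟨_, hn⟩ := hA (insert (.fml A) (insert (.fml (.neg B)) Γ)) (.inl rfl)
    fun Δ hΔ hentA => hB Δ (hΔ (.inr (.inl rfl))) fun Δ' hΔ' hentB =>
      hclose Δ' ((hΓ'.trans hΔ).trans hΔ') ((hentA.mono hΔ').neg_imp hentB)
  exact ⟨_, .fImp hΓ hn⟩

theorem decomposable_and_decomposable_neg (A : Fml) :
    Decomposable L cs pb cut R A ∧ Decomposable L cs pb cut R (.neg A) := by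
  induction A with
  | prop n => exact ⟨decomposable_prop n, decomposable_neg_prop n⟩
  | bot => exact ⟨decomposable_bot, decomposable_neg_bot⟩
  | neg A ih => exact ⟨ih.2, ih.1.neg_neg⟩
  | imp A B ihA ihB => exact ⟨ihA.2.imp ihB.1, ihA.1.neg_imp ihB.2⟩
  | box t A => exact ⟨decomposable_box t A, decomposable_neg_box t A⟩

theorem tabProof_of_isTaut (hA : IsTaut A) : TabProof L cs pb cut A :=
  (decomposable_and_decomposable_neg A).2 _ rfl fun _ _ hent =>
    tab_of_forall_not_agrees fun v hv => by simpa [evalProp, hA v] using hent v hv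

end Tautologies

section JustificationAxioms

variable {s t : Term}

theorem tabProof_imp
    (h : ∀ Γ, Node.fml A ∈ Γ → Node.fml (.neg B) ∈ Γ →
      Tab L cs pb cut {.neg (.imp A B)} Γ) :
    TabProof L cs pb cut (.imp A B) :=
  let ⟨_, hn⟩ := h _ (.inl rfl) (.inr (.inl rfl))
  ⟨_, .fImp rfl hn⟩

theorem tabProof_box_imp_box
    (h : ∀ Γ, Node.pos s A ∈ Γ → Node.neg t B ∈ Γ →
      Tab L cs pb cut {.neg (.imp (.box s A) (.box t B))} Γ) :
    TabProof L cs pb cut (.imp (.box s A) (.box t B)) :=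
  tabProof_imp fun _ hs ht =>
    let ⟨_, hn⟩ := h _ (.inr (.inl rfl)) (.inl rfl)
    ⟨_, .te hs <| .fe (.inr ht) hn⟩

theorem tabProof_sumL : TabProof L cs pb cut (.imp (.box s A) (.box (.sum s t) A)) :=
  tabProof_box_imp_box fun _ hs hst => ⟨_, .plusL hst <| .closeE (.inr hs) (.inl rfl)⟩

theorem tabProof_sumR : TabProof L cs pb cut (.imp (.box s A) (.box (.sum t s) A)) :=
  tabProof_box_imp_box fun _ hs hts => ⟨_, .plusR hts <| .closeE (.inr hs) (.inl rfl)⟩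

theorem tabProof_jK :
    TabProof L cs pb cut
      (.imp (.box s (.imp A B)) (.imp (.box t A) (.box (.app s t) B))) :=
  tabProof_imp fun _ hs hneg =>
    let root : Fml :=
      .neg (.imp (.box s (.imp A B)) (.imp (.box t A) (.box (.app s t) B)))
    have hsub : CSSub cs {root} (.imp A B) := .inl ⟨root, rfl, .neg (.impL (.box (.refl _)))⟩
    have hocc : OccRoot {root} (.app s t) :=
      ⟨root, rfl, .neg (.impR (.impR (.boxT (.refl _))))⟩
    ⟨_, .te hs <| .fImp (.inr hneg) <| .te (.inl rfl) <|
      .fe (.inr (.inr (.inl rfl))) <|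
      .appR (.inr (.inr (.inr (.inr (.inl rfl))))) (.inr (.inl rfl)) hsub hocc <|
      .closeE (.inl rfl) (.inr (.inl rfl))⟩

theorem tabProof_jT (hT : L.hasT = true) : TabProof L cs pb cut (.imp (.box t A) A) :=
  tabProof_imp fun _ ht hA =>
    ⟨_, .te ht <| .ruleT hT (.inl rfl) <| .closeF (.inl rfl) (.inr (.inr hA))⟩

theorem tabProof_jD (hD : L.hasD = true) : TabProof L cs pb cut (.imp (.box t .bot) .bot) :=
  tabProof_imp fun _ ht _ => ⟨_, .te ht <| .ruleD hD (.inl rfl) <| .closeBot (.inl rfl)⟩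

theorem tabProof_j4 (h4 : L.has4 = true) :
    TabProof L cs pb cut (.imp (.box t A) (.box (.bang t) (.box t A))) :=
  tabProof_box_imp_box fun _ ht hbang =>
    ⟨_, .rule4 h4 hbang <| .closeE (.inr ht) (.inl rfl)⟩

theorem tabProof_jB (hB : L.hasB = true) :
    TabProof L cs pb cut (.imp (.neg A) (.box (.qbar t) (.neg (.box t A)))) :=
  tabProof_imp fun _ hA hqbar =>
    ⟨_, .fe hqbar <| .ruleB hB (.inl rfl) <| .closeF (.inl rfl) (.inr (.inr hA))⟩

theorem tabProof_j5 (h5 : L.has5 = true) :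
    TabProof L cs pb cut (.imp (.neg (.box t A)) (.box (.quest t) (.neg (.box t A)))) :=
  tabProof_imp fun _ ht hquest =>
    ⟨_, .fe hquest <| .rule5 h5 (.inl rfl) <| .fe (.inr (.inr ht)) <|
      .closeE (.inr (.inl rfl)) (.inl rfl)⟩

end JustificationAxioms

end JLTab

/-- every axiom instance of JL has a JL^e_CS-tableau proof that
uses neither (PB), (PB_e) nor (cut) (both flags set to false). -/
theorem JLTab.axioms_provable_without_pb_cut (L : Logic) (cs : ConstSpec L)
    (A : Fml) (hA : Axm L A) : TabProof L cs false false A := by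
  cases hA with
  | taut htaut => exact tabProof_of_isTaut htaut
  | sumL => exact tabProof_sumL
  | sumR => exact tabProof_sumR
  | jK => exact tabProof_jK
  | jT hT => exact tabProof_jT hT
  | jD hD => exact tabProof_jD hD
  | j4 h4 => exact tabProof_j4 h4
  | jB hB => exact tabProof_jB hB
  | j5 h5 => exact tabProof_j5 h5
end
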